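/- Let K be a field of characteristic zero with a derivation ∂ : K → K, let t ∈ K satisfy ∂t = 1, and let α ∈ K be a constant (∂α = 0) with α ≠ 1/2. Let z ∈ K be a solution of the second Painlevé equation P_II(α), i.e. ∂(∂z) = 2z³ + t·z + α (so that ∂z - z² - t/2 ≠ 0), and set w = T₋(z) = -z + (α - 1/2)/(∂z - z² - t/2). Then ∂w + w² + t/2 ≠ 0 and T₊ applied to w with parameter α - 1, namely -w - ((α - 1) + 1/2)/(∂w + w² + t/2), equals z. In particular the Bäcklund transformation T₋ defines a bijection from the set of solutions of P_II(α) in K onto the set of solutions of P_II(α - 1) in K, with inverse T₊. -/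

import Mathlib

/-- The basic facts about `T₋` at a single solution. -/
theorem PII_key {K : Type*} [Field K] [CharZero K]
    (D : Derivation ℚ K K) (t α z w : K)
    (ht : D t = 1) (hα : D α = 0) (hαne : α ≠ 1 / 2)
    (hz : D (D z) = 2 * z ^ 3 + t * z + α)
    (hw : w = -z + (α - 1 / 2) / (D z - z ^ 2 - t / 2)) :
    D z - z ^ 2 - t / 2 ≠ 0 ∧
    D w + w ^ 2 + t / 2 = -(D z - z ^ 2 - t / 2) ∧
    D (D w) = 2 * w ^ 3 + t * w + (α - 1) := by
  have hsq : ∀ x : K, D (x ^ 2) = 2 * x * D x := by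
    intro x
    rw [pow_two, Derivation.leibniz]
    simp only [smul_eq_mul]
    ring
  have h2 : D (2 : K) = 0 := by simpa using D.map_natCast 2
  have ht2 : D (t / 2) = 1 / 2 := by
    have h : D (2 * (t / 2)) = D t := by congr 1; ring
    rw [Derivation.leibniz, h2, ht] at h
    simp only [smul_eq_mul, mul_zero, add_zero] at h
    linear_combination h / 2
  have hhalf : D (1 / 2 : K) = 0 := by
    have h : D (2 * (1 / 2 : K)) = D 1 := by congr 1; norm_num
    rw [Derivation.leibniz, h2, Derivation.map_one_eq_zero] at h
    simp only [smul_eq_mul, mul_zero, add_zero] at h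
    linear_combination h / 2
  obtain ⟨F, hF⟩ : ∃ F, F = D z - z ^ 2 - t / 2 := ⟨_, rfl⟩
  have hDF : D F = -2 * z * F + (α - 1 / 2) := by
    rw [hF, map_sub, map_sub, hz, hsq, ht2]
    ring
  rw [← hF] at hw ⊢
  have hF0 : F ≠ 0 := by
    intro h
    rw [h, map_zero] at hDF
    apply hαne
    linear_combination -hDF
  have hwF : (w + z) * F = α - 1 / 2 := by
    rw [hw]
    field_simp
    ring
  have hd : D ((w + z) * F) = 0 := by rw [hwF, map_sub, hα, hhalf, sub_zero]
  rw [Derivation.leibniz, map_add, hDF] at hd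
  simp only [smul_eq_mul] at hd
  have hG : D w + w ^ 2 + t / 2 = -F := by
    apply mul_right_cancel₀ hF0
    linear_combination hd + (w + z) * hwF + F * hF
  refine ⟨hF0, hG, ?_⟩
  have h := congrArg D hG
  rw [map_add, map_add, hsq, ht2, map_neg, hDF] at h
  linear_combination h - 2 * w * hG + 2 * hwF

/-- For `α ≠ 1/2` and `z` a solution of `P_II(α)`, the denominator
of `T₋` does not vanish at `z`; setting `w = T₋(z)`, the denominator of `T₊`
(with parameter `α - 1`) does not vanish at `w` and `T₊(w) = z`.  In particular
`T₋` is a bijection from the solution set of `P_II(α)` in `K` onto the solution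
set of `P_II(α - 1)` in `K`, with inverse `T₊`. -/
theorem PII_Tminus_bijection {K : Type*} [Field K] [CharZero K]
    (D : Derivation ℚ K K) (t α z w : K)
    (ht : D t = 1) (hα : D α = 0) (hαne : α ≠ 1 / 2)
    (hz : D (D z) = 2 * z ^ 3 + t * z + α)
    (hw : w = -z + (α - 1 / 2) / (D z - z ^ 2 - t / 2)) :
    D z - z ^ 2 - t / 2 ≠ 0 ∧
    D w + w ^ 2 + t / 2 ≠ 0 ∧
    -w - ((α - 1) + 1 / 2) / (D w + w ^ 2 + t / 2) = z ∧
    Set.BijOn (fun u => -u + (α - 1 / 2) / (D u - u ^ 2 - t / 2))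
      {u | D (D u) = 2 * u ^ 3 + t * u + α}
      {u | D (D u) = 2 * u ^ 3 + t * u + (α - 1)} := by
  have key := fun (u v : K) hu hv => PII_key D t α u v ht hα hαne hu hv
  have back : ∀ u v : K, D (D u) = 2 * u ^ 3 + t * u + α →
      v = -u + (α - 1 / 2) / (D u - u ^ 2 - t / 2) →
      -v - ((α - 1) + 1 / 2) / (D v + v ^ 2 + t / 2) = u := by
    intro u v hu hv
    obtain ⟨h0, h1, -⟩ := key u v hu hv
    rw [h1, div_neg, hv]
    ring
  obtain ⟨h0, h1, -⟩ := key z w hz hw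
  refine ⟨h0, by rw [h1]; exact neg_ne_zero.mpr h0, back z w hz hw, ?_, ?_, ?_⟩
  · intro u hu
    exact (key u _ hu rfl).2.2
  · intro u hu v hv huv
    dsimp only at huv
    rw [← back u _ hu rfl, ← back v _ hv rfl, huv]
  · intro u hu
    simp only [Set.mem_setOf_eq] at hu
    have hβ : D (1 - α) = 0 := by
      rw [map_sub, hα, Derivation.map_one_eq_zero, sub_zero]
    have hβne : 1 - α ≠ 1 / 2 := by
      intro h
      apply hαne
      linear_combination -h
    have hnu : D (D (-u)) = 2 * (-u) ^ 3 + t * (-u) + (1 - α) := by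
      rw [map_neg, map_neg, hu]
      ring
    obtain ⟨v, hv⟩ : ∃ v, v = -(-u) + ((1 - α) - 1 / 2) / (D (-u) - (-u) ^ 2 - t / 2) :=
      ⟨_, rfl⟩
    obtain ⟨g0, g1, g2⟩ := PII_key D t (1 - α) (-u) v ht hβ hβne hnu hv
    refine ⟨-v, ?_, ?_⟩
    · simp only [Set.mem_setOf_eq]
      rw [map_neg, map_neg, g2]
      ring
    · have e : D (-v) - (-v) ^ 2 - t / 2 = D (-u) - (-u) ^ 2 - t / 2 := by
        rw [map_neg D v]
        linear_combination -g1
      dsimp only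
      rw [e, hv]
      ring
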